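/- arXiv:1911.01689 — 5 statements merged into one kernel-verified Lean document; each statement's English description precedes it below -/
import Mathlib

section
/- Let A and B be C*-algebras, δ ≥ 0, and let φ : A → B be a bounded linear map which is δ-self-adjoint. Then the map ψ := (1/2)(φ + φ*) (where φ*(x) := φ(x*)*) is self-adjoint and satisfies ‖φ − ψ‖ ≤ δ/2. Moreover, if in addition φ is an ε-order zero map for some ε ≥ 0, then ψ is an (ε + (δ/2)‖φ‖)-order zero map. -/
/-- `φ` is an ε-order zero map: `‖φ(x)φ(y)‖ ≤ ε‖x‖‖y‖` for all positive `x, y` with `xy = 0`. -/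
def IsEpsOrderZero {A B : Type*} [NonUnitalCStarAlgebra A] [PartialOrder A] [StarOrderedRing A]
    [NonUnitalCStarAlgebra B] (ε : ℝ) (φ : A →L[ℂ] B) : Prop :=
  ∀ x y : A, 0 ≤ x → 0 ≤ y → x * y = 0 → ‖φ x * φ y‖ ≤ ε * ‖x‖ * ‖y‖

/-- `φ` is δ-self-adjoint: `‖φ(x*) − φ(x)*‖ ≤ δ‖x‖` for all `x`. -/
def IsDeltaSelfAdjoint {A B : Type*} [NonUnitalCStarAlgebra A] [NonUnitalCStarAlgebra B]
    (δ : ℝ) (φ : A →L[ℂ] B) : Prop :=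
  ∀ x : A, ‖φ (star x) - star (φ x)‖ ≤ δ * ‖x‖

/-- If `φ` is δ-self-adjoint then the map `ψ = (1/2)(φ + φ*)`, where
`φ*(x) = φ(x*)*`, is self-adjoint and satisfies `‖φ − ψ‖ ≤ δ/2`; moreover, if `φ` is
ε-order zero then `ψ` is `(ε + (δ/2)‖φ‖)`-order zero. -/
theorem stmt_1 {A B : Type*} [NonUnitalCStarAlgebra A] [PartialOrder A] [StarOrderedRing A]
    [NonUnitalCStarAlgebra B] (δ : ℝ) (hδ : 0 ≤ δ) (φ : A →L[ℂ] B)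
    (hφ : IsDeltaSelfAdjoint δ φ) :
    ∃ ψ : A →L[ℂ] B,
      (∀ x : A, ψ x = (2⁻¹ : ℂ) • (φ x + star (φ (star x)))) ∧
      (∀ x : A, ψ (star x) = star (ψ x)) ∧
      ‖φ - ψ‖ ≤ δ / 2 ∧
      ∀ ε : ℝ, 0 ≤ ε → IsEpsOrderZero ε φ → IsEpsOrderZero (ε + δ / 2 * ‖φ‖) ψ := by
  let S : A →L[ℂ] B :=
    LinearMap.mkContinuous
      { toFun := fun x => star (φ (star x))
        map_add' := fun x y => by simp
        map_smul' := fun c x => by simp [star_smul] } ‖φ‖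
      (fun x => by
        simp only [LinearMap.coe_mk, AddHom.coe_mk, norm_star]
        simpa using φ.le_opNorm (star x))
  have hS : ∀ x, S x = star (φ (star x)) := fun x => rfl
  have hψ : ∀ x, ((2⁻¹ : ℂ) • (φ + S)) x = (2⁻¹ : ℂ) • (φ x + star (φ (star x))) := by
    intro x
    simp [hS]
  refine ⟨(2⁻¹ : ℂ) • (φ + S), hψ, ?_, ?_, ?_⟩
  · intro x
    rw [hψ, hψ, star_smul, star_add, star_star, star_star, add_comm]
    simp
  · refine ContinuousLinearMap.opNorm_le_bound _ (by positivity) fun x => ?_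
    have h1 : (φ - (2⁻¹ : ℂ) • (φ + S)) x = (2⁻¹ : ℂ) • (φ x - star (φ (star x))) := by
      rw [sub_apply, hψ]
      module
    have h2 := hφ (star x)
    rw [star_star, norm_star] at h2
    rw [h1, norm_smul]
    norm_num
    linarith
  · intro ε hε h0 x y hx hy hxy
    have sx : star x = x := (IsSelfAdjoint.of_nonneg hx)
    have sy : star y = y := (IsSelfAdjoint.of_nonneg hy)
    have hyx : y * x = 0 := by
      have := congrArg star hxy
      simpa [sx, sy] using this
    have e1 := h0 x y hx hy hxy
    have e2 := h0 y x hy hx hyx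
    have dx := hφ x
    have dy := hφ y
    have nx := φ.le_opNorm x
    have ny := φ.le_opNorm y
    rw [hψ, hψ]
    rw [sx] at dx ⊢
    rw [sy] at dy ⊢
    generalize φ x = a at *
    generalize φ y = b at *
    have key : ((2⁻¹ : ℂ) • (a + star a)) * ((2⁻¹ : ℂ) • (b + star b)) =
        (4⁻¹ : ℂ) • (((a * b + star (b * a)) + (a * b - a * (b - star b)))
          + (a * b - (a - star a) * b)) := by
      rw [smul_mul_smul_comm, star_mul]
      have h4 : (2⁻¹ : ℂ) * 2⁻¹ = 4⁻¹ := by norm_num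
      rw [h4]
      congr 1
      simp only [mul_add, add_mul, mul_sub, sub_mul]
      abel
    have t1 : ‖a * (b - star b)‖ ≤ (‖φ‖ * ‖x‖) * (δ * ‖y‖) :=
      (norm_mul_le _ _).trans (by gcongr)
    have t2 : ‖(a - star a) * b‖ ≤ (δ * ‖x‖) * (‖φ‖ * ‖y‖) :=
      (norm_mul_le _ _).trans (by gcongr)
    have t3 := norm_add_le ((a * b + star (b * a)) + (a * b - a * (b - star b)))
      (a * b - (a - star a) * b)
    have t4 := norm_add_le (a * b + star (b * a)) (a * b - a * (b - star b))
    have t5 := norm_add_le (a * b) (star (b * a))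
    have t6 := norm_sub_le (a * b) (a * (b - star b))
    have t7 := norm_sub_le (a * b) ((a - star a) * b)
    rw [norm_star] at t5
    rw [key, norm_smul]
    have n4 : ‖(4⁻¹ : ℂ)‖ = 4⁻¹ := by norm_num
    rw [n4]
    linarith
end

section
/- Let A and B be C*-algebras and φ : A → B a bounded linear ε-order zero map. Then for all x, y ∈ A which are orthogonal (x ⊥ y) one has ‖φ(x)φ(y)‖ ≤ 16ε‖x‖‖y‖. -/
/-- `x ⊥ y` in a C*-algebra: `xy = yx = x*y = xy* = 0`. -/
def AreOrthogonal {A : Type*} [NonUnitalCStarAlgebra A] (x y : A) : Prop :=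
  x * y = 0 ∧ y * x = 0 ∧ star x * y = 0 ∧ x * star y = 0

open Complex ComplexStarModule in
lemma posPart_mul_zero_aux {A : Type*} [NonUnitalCStarAlgebra A] [PartialOrder A]
    [StarOrderedRing A] (a z : A) (ha : IsSelfAdjoint a) (h : a * z = 0) : a⁺ * z = 0 := by
  have h1 : a⁺ * a = a⁺ * a⁺ := by
    conv_lhs => rw [← CFC.posPart_sub_negPart a ha]
    conv_lhs => rw [CFC.posPart_sub_negPart a ha]
    nth_rewrite 2 [← CFC.posPart_sub_negPart a ha]
    rw [mul_sub, CFC.posPart_mul_negPart, sub_zero]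
  have hs : star a⁺ = a⁺ := (CFC.posPart_nonneg a).isSelfAdjoint
  rw [← CStarRing.star_mul_self_eq_zero_iff, star_mul, hs, mul_assoc, ← mul_assoc a⁺, ← h1,
    mul_assoc, h, mul_zero, mul_zero]

lemma negPart_mul_zero_aux {A : Type*} [NonUnitalCStarAlgebra A] [PartialOrder A]
    [StarOrderedRing A] (a z : A) (ha : IsSelfAdjoint a) (h : a * z = 0) : a⁻ * z = 0 := by
  rw [← CFC.posPart_neg]
  exact posPart_mul_zero_aux (-a) z ha.neg (by rw [neg_mul, h, neg_zero])

open Complex ComplexStarModule in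
lemma decomp_aux {A : Type*} [NonUnitalCStarAlgebra A] [PartialOrder A]
    [StarOrderedRing A] (x : A) : ∃ p : Fin 4 → A, (∀ i, 0 ≤ p i) ∧ (∀ i, ‖p i‖ ≤ ‖x‖) ∧
      x = ∑ i : Fin 4, (I ^ (i : ℕ)) • p i ∧
      ∀ z, x * z = 0 → star x * z = 0 → ∀ i, p i * z = 0 := by
  refine ⟨![(ℜ x : A)⁺, (ℑ x : A)⁺, (ℜ x : A)⁻, (ℑ x : A)⁻], ?_, ?_, ?_, ?_⟩
  · intro i
    fin_cases i
    · exact CFC.posPart_nonneg _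
    · exact CFC.posPart_nonneg _
    · exact CFC.negPart_nonneg _
    · exact CFC.negPart_nonneg _
  · intro i
    fin_cases i
    · exact CStarAlgebra.norm_posPart_le _ |>.trans <| realPart.norm_le x
    · exact CStarAlgebra.norm_posPart_le _ |>.trans <| imaginaryPart.norm_le x
    · exact CStarAlgebra.norm_negPart_le _ |>.trans <| realPart.norm_le x
    · exact CStarAlgebra.norm_negPart_le _ |>.trans <| imaginaryPart.norm_le x
  · conv_lhs => rw [← CStarAlgebra.linear_combination_nonneg x]
    simp [Fin.sum_univ_four, I_sq, I_pow_three]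
    abel
  · intro z h1 h2
    have hr : (ℜ x : A) * z = 0 := by
      rw [realPart_apply_coe, smul_mul_assoc, add_mul, h1, h2, add_zero, smul_zero]
    have hi : (ℑ x : A) * z = 0 := by
      rw [imaginaryPart_apply_coe, smul_mul_assoc, smul_mul_assoc, sub_mul, h1, h2, sub_zero,
        smul_zero, smul_zero]
    intro i
    fin_cases i
    · exact posPart_mul_zero_aux _ _ (ℜ x).2 hr
    · exact posPart_mul_zero_aux _ _ (ℑ x).2 hi
    · exact negPart_mul_zero_aux _ _ (ℜ x).2 hr
    · exact negPart_mul_zero_aux _ _ (ℑ x).2 hi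

/-- If `φ` is a bounded linear ε-order zero map between C*-algebras, then for
all orthogonal `x, y` one has `‖φ(x)φ(y)‖ ≤ 16ε‖x‖‖y‖`. -/
theorem stmt_3 {A B : Type*} [NonUnitalCStarAlgebra A] [PartialOrder A] [StarOrderedRing A]
    [NonUnitalCStarAlgebra B] (ε : ℝ) (φ : A →L[ℂ] B) (hφ : IsEpsOrderZero ε φ)
    (x y : A) (hxy : AreOrthogonal x y) :
    ‖φ x * φ y‖ ≤ 16 * ε * ‖x‖ * ‖y‖ := by
  obtain ⟨h1, h2, h3, h4⟩ := hxy
  have h5 : star x * star y = 0 := by rw [← star_mul, h2, star_zero]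
  by_cases hx : x = 0
  · simp [hx]
  by_cases hy : y = 0
  · simp [hy]
  have hε : 0 ≤ ε := by
    have h := hφ (star x * x) (star y * y) (star_mul_self_nonneg x) (star_mul_self_nonneg y)
      (by rw [mul_assoc, ← mul_assoc x, h4, zero_mul, mul_zero])
    have h' := (norm_nonneg _).trans h
    rw [mul_assoc] at h'
    have hp : 0 < ‖star x * x‖ * ‖star y * y‖ := by
      rw [CStarRing.norm_star_mul_self, CStarRing.norm_star_mul_self]
      have := norm_pos_iff.2 hx
      have := norm_pos_iff.2 hy
      positivity
    exact nonneg_of_mul_nonneg_left h' hp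
  obtain ⟨p, hp0, hpn, hps, hpz⟩ := decomp_aux x
  obtain ⟨q, hq0, hqn, hqs, hqz⟩ := decomp_aux y
  have hpq : ∀ i j, p i * q j = 0 := by
    intro i j
    have e1 : p i * y = 0 := hpz y h1 h3 i
    have e2 : p i * star y = 0 := hpz (star y) h4 h5 i
    have hsp : star (p i) = p i := (hp0 i).isSelfAdjoint
    have hsq : star (q j) = q j := (hq0 j).isSelfAdjoint
    have e3 : q j * p i = 0 := by
      apply hqz
      · rw [← star_star (y * p i), star_mul, hsp, e2, star_zero]
      · rw [← star_star (star y * p i), star_mul, hsp, star_star, e1, star_zero]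
    rw [← star_star (p i * q j), star_mul, hsp, hsq, e3, star_zero]
  have key : φ x * φ y = ∑ i : Fin 4, ∑ j : Fin 4,
      (Complex.I ^ (i : ℕ) * Complex.I ^ (j : ℕ)) • (φ (p i) * φ (q j)) := by
    conv_lhs => rw [hps, hqs]
    simp only [map_sum, map_smul, Finset.sum_mul_sum, smul_mul_smul_comm]
  rw [key]
  have bound : ∀ i j : Fin 4,
      ‖(Complex.I ^ (i : ℕ) * Complex.I ^ (j : ℕ)) • (φ (p i) * φ (q j))‖ ≤ ε * ‖x‖ * ‖y‖ := by
    intro i j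
    rw [norm_smul, norm_mul, norm_pow, norm_pow, Complex.norm_I, one_pow, one_pow, one_mul, one_mul]
    refine (hφ _ _ (hp0 i) (hq0 j) (hpq i j)).trans ?_
    have := hpn i
    have := hqn j
    gcongr
  calc _ ≤ ∑ i : Fin 4, ∑ j : Fin 4, ε * ‖x‖ * ‖y‖ :=
        norm_sum_le_of_le _ fun i _ => norm_sum_le_of_le _ fun j _ => bound i j
    _ = 16 * ε * ‖x‖ * ‖y‖ := by
        simp
        ring
end

section
/- Let A and B be C*-algebras and φ : A → B a bounded linear ε-order zero map which is a positive contraction (‖φ‖ ≤ 1) satisfying the Schwarz inequality φ(x)*φ(x) ≤ φ(x*x) for all x ∈ A (this holds in particular for every completely positive contraction, by Kadison's inequality). Then for all x, y ∈ A which are orthogonal (x ⊥ y) one has ‖φ(x)φ(y)‖ ≤ ε^{1/2}‖x‖‖y‖. -/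
theorem aux_norm_conj_le {B : Type*} [NonUnitalCStarAlgebra B] (s b : B) (hb : IsSelfAdjoint b) :
    ‖s * b * star s‖ ≤ ‖star s * s * b‖ := by
  have hsa : IsSelfAdjoint ((s * b * star s : B) : Unitization ℂ B) := by
    have : IsSelfAdjoint (s * b * star s) := hb.conjugate s
    rw [IsSelfAdjoint, ← Unitization.inr_star, this.star_eq]
  have h1 := hsa.spectralRadius_eq_nnnorm
  have h2 : spectralRadius ℂ ((s * b * star s : B) : Unitization ℂ B) ≤
      spectralRadius ℂ ((star s * s * b : B) : Unitization ℂ B) := by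
    refine iSup₂_le fun k hk => ?_
    by_cases hk0 : k = 0
    · simp [hk0]
    · have hc := spectrum.nonzero_mul_comm (𝕜 := ℂ) ((s * b : B) : Unitization ℂ B)
        ((star s : B) : Unitization ℂ B)
      have : k ∈ spectrum ℂ ((star s * s * b : B) : Unitization ℂ B) := by
        have hk' : k ∈ spectrum ℂ (((s * b : B) : Unitization ℂ B) *
            ((star s : B) : Unitization ℂ B)) \ {0} := by
          rw [← Unitization.inr_mul]; exact ⟨hk, hk0⟩
        rw [hc, ← Unitization.inr_mul, ← mul_assoc] at hk'
        exact hk'.1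
      exact le_iSup₂ (f := fun (k : ℂ) (_ : k ∈ spectrum ℂ _) => (‖k‖₊ : ENNReal)) k this
  have h3 := (h1 ▸ h2).trans (spectrum.spectralRadius_le_nnnorm ((star s * s * b : B) : Unitization ℂ B))
  have h4 : ‖((s * b * star s : B) : Unitization ℂ B)‖₊ ≤
      ‖((star s * s * b : B) : Unitization ℂ B)‖₊ := by exact_mod_cast h3
  have h5 : ‖((s * b * star s : B) : Unitization ℂ B)‖ ≤
      ‖((star s * s * b : B) : Unitization ℂ B)‖ := h4
  rwa [Unitization.norm_inr, Unitization.norm_inr] at h5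


/-- If `φ` is a bounded linear ε-order zero map between C*-algebras which is a
positive contraction satisfying the Schwarz inequality `φ(x)*φ(x) ≤ φ(x*x)`, then for all
orthogonal `x, y` one has `‖φ(x)φ(y)‖ ≤ ε^(1/2)‖x‖‖y‖`. -/
theorem stmt_4 {A B : Type*} [NonUnitalCStarAlgebra A] [PartialOrder A] [StarOrderedRing A]
    [NonUnitalCStarAlgebra B] [PartialOrder B] [StarOrderedRing B]
    (ε : ℝ) (φ : A →L[ℂ] B) (hφ : IsEpsOrderZero ε φ)
    (hpos : ∀ x : A, 0 ≤ x → 0 ≤ φ x) (hcontr : ‖φ‖ ≤ 1)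
    (hschwarz : ∀ x : A, star (φ x) * φ x ≤ φ (star x * x))
    (x y : A) (hxy : AreOrthogonal x y) :
    ‖φ x * φ y‖ ≤ Real.sqrt ε * ‖x‖ * ‖y‖ := by
  obtain ⟨hxy0, -, -, -⟩ := hxy
  let ψ : A →ₚ[ℂ] B := PositiveLinearMap.mk₀ φ.toLinearMap hpos
  have hstar : ∀ z, φ (star z) = star (φ z) := fun z => map_star ψ z
  have ha := hpos _ (star_mul_self_nonneg x)
  have hb := hpos _ (mul_star_self_nonneg y)
  have hS := hφ (star x * x) (y * star y) (star_mul_self_nonneg x) (mul_star_self_nonneg y)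
    (by rw [mul_assoc, ← mul_assoc x, hxy0]; simp)
  rw [CStarRing.norm_star_mul_self, CStarRing.norm_self_mul_star] at hS
  obtain ⟨s, hs⟩ := CStarAlgebra.nonneg_iff_eq_star_mul_self.mp ha
  have e1 : ‖φ x * φ y‖ ^ 2 ≤ ‖star (φ y) * φ (star x * x) * φ y‖ := by
    rw [sq, ← CStarRing.norm_star_mul_self]
    have : star (φ x * φ y) * (φ x * φ y) = star (φ y) * (star (φ x) * φ x) * φ y := by
      simp [mul_assoc]
    have h0 := star_mul_self_nonneg (φ x * φ y)
    rw [this] at h0 ⊢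
    exact CStarAlgebra.norm_le_norm_of_nonneg_of_le h0
      (star_left_conjugate_le_conjugate (hschwarz x) _)
  have e2 : ‖star (φ y) * φ (star x * x) * φ y‖ = ‖s * (φ y * star (φ y)) * star s‖ := by
    have h1 : star (φ y) * φ (star x * x) * φ y = star (s * φ y) * (s * φ y) := by
      rw [hs]; simp [mul_assoc]
    have h2 : s * (φ y * star (φ y)) * star s = (s * φ y) * star (s * φ y) := by
      simp [mul_assoc]
    rw [h1, h2, CStarRing.norm_star_mul_self, CStarRing.norm_self_mul_star]
  have e3 : ‖s * (φ y * star (φ y)) * star s‖ ≤ ‖s * φ (y * star y) * star s‖ := by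
    have h := hschwarz (star y)
    rw [hstar, star_star, star_star] at h
    exact CStarAlgebra.norm_le_norm_of_nonneg_of_le
      (star_right_conjugate_nonneg (mul_star_self_nonneg _) s)
      (star_right_conjugate_le_conjugate h s)
  have e4 := aux_norm_conj_le s (φ (y * star y)) (IsSelfAdjoint.of_nonneg hb)
  rw [← hs] at e4
  have e5 : ‖φ x * φ y‖ ^ 2 ≤ ε * (‖x‖ * ‖x‖) * (‖y‖ * ‖y‖) :=
    (e1.trans (e2.le.trans (e3.trans e4))).trans hS
  have hε : ε ≤ Real.sqrt ε ^ 2 := by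
    rcases le_total 0 ε with h | h
    · rw [Real.sq_sqrt h]
    · exact h.trans (sq_nonneg _)
  refine (sq_le_sq₀ (norm_nonneg _) (by positivity)).mp ?_
  calc _ ≤ _ := e5
    _ ≤ Real.sqrt ε ^ 2 * (‖x‖ * ‖x‖) * (‖y‖ * ‖y‖) := by gcongr
    _ = _ := by ring
end

section
/- Let A and B be C*-algebras with A nonunital, let H be a complex Hilbert space, and let π : B → B(H) be a nondegenerate representation (a *-homomorphism such that the closed linear span of {π(b)ξ : b ∈ B, ξ ∈ H} equals H). Let φ : A → B be a bounded linear ε-order zero map. Then there exists a bounded linear map φ† : A† → B(H), taking values in the double commutant π(B)'' of π(B) in B(H), such that φ†(x) = π(φ(x)) for every x ∈ A, and φ† is an ε-order zero map. Moreover, if φ is δ-self-adjoint, then φ† can be chosen to be 6δ-self-adjoint. -/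
open Filter Topology

/-- Convergence of a family of operators in the weak operator topology, along a filter. -/
def WT {ι H : Type*} [NormedAddCommGroup H] [InnerProductSpace ℂ H]
    (l : Filter ι) (T : ι → H →L[ℂ] H) (S : H →L[ℂ] H) : Prop :=
  ∀ ξ η : H, Tendsto (fun i => inner ℂ (T i ξ) η) l (𝓝 (inner ℂ (S ξ) η))

section WTlemmas
variable {ι H : Type*} [NormedAddCommGroup H] [InnerProductSpace ℂ H]

lemma WT.add {l : Filter ι} {T R : ι → H →L[ℂ] H} {S Q : H →L[ℂ] H} (h : WT l T S)
    (h' : WT l R Q) : WT l (fun i => T i + R i) (S + Q) := by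
  intro ξ η
  simpa [inner_add_left] using (h ξ η).add (h' ξ η)

lemma WT.sub {l : Filter ι} {T R : ι → H →L[ℂ] H} {S Q : H →L[ℂ] H} (h : WT l T S)
    (h' : WT l R Q) : WT l (fun i => T i - R i) (S - Q) := by
  intro ξ η
  simpa [inner_sub_left] using (h ξ η).sub (h' ξ η)

lemma WT.smul {l : Filter ι} {T : ι → H →L[ℂ] H} {S : H →L[ℂ] H} (h : WT l T S)
    (c : ℂ) : WT l (fun i => c • T i) (c • S) := by
  intro ξ η
  simpa [inner_smul_left, mul_comm] using (h ξ η).const_mul (starRingEnd ℂ c)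

lemma WT.of_tendsto {l : Filter ι} {T : ι → H →L[ℂ] H} {S : H →L[ℂ] H}
    (h : Tendsto T l (𝓝 S)) : WT l T S := by
  intro ξ η
  have h1 : Tendsto (fun i => T i ξ) l (𝓝 (S ξ)) :=
    ((ContinuousLinearMap.apply ℂ H ξ).continuous.tendsto S).comp h
  exact h1.inner tendsto_const_nhds

lemma WT.mul_right {l : Filter ι} {T : ι → H →L[ℂ] H} {S : H →L[ℂ] H} (h : WT l T S)
    (Q : H →L[ℂ] H) : WT l (fun i => T i * Q) (S * Q) := by
  intro ξ η
  exact h (Q ξ) η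

lemma WT.mul_left [CompleteSpace H] {l : Filter ι} {T : ι → H →L[ℂ] H} {S : H →L[ℂ] H}
    (h : WT l T S) (Q : H →L[ℂ] H) : WT l (fun i => Q * T i) (Q * S) := by
  intro ξ η
  simpa [ContinuousLinearMap.adjoint_inner_right] using
    h ξ (ContinuousLinearMap.adjoint Q η)

lemma WT.star [CompleteSpace H] {l : Filter ι} {T : ι → H →L[ℂ] H} {S : H →L[ℂ] H}
    (h : WT l T S) : WT l (fun i => star (T i)) (star S) := by
  intro ξ η
  have h1 := (Complex.continuous_conj.tendsto _).comp (h η ξ)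
  simp only [ContinuousLinearMap.star_eq_adjoint, ContinuousLinearMap.adjoint_inner_left]
  simpa [Function.comp_def, inner_conj_symm] using h1

lemma WT.unique {l : Filter ι} [NeBot l] {T : ι → H →L[ℂ] H} {S Q : H →L[ℂ] H} (h : WT l T S)
    (h' : WT l T Q) : S = Q := by
  ext ξ
  exact ext_inner_right ℂ fun η => tendsto_nhds_unique (h ξ η) (h' ξ η)

lemma WT.congr {l : Filter ι} {T R : ι → H →L[ℂ] H} {S : H →L[ℂ] H} (h : WT l T S)
    (h' : T =ᶠ[l] R) : WT l R S := by
  intro ξ η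
  refine (h ξ η).congr' ?_
  filter_upwards [h'] with i hi
  rw [hi]

lemma WT.norm_le {l : Filter ι} [NeBot l] {T : ι → H →L[ℂ] H} {S : H →L[ℂ] H} (h : WT l T S)
    {C : ℝ} (hC : 0 ≤ C) (hT : ∀ᶠ i in l, ‖T i‖ ≤ C) : ‖S‖ ≤ C := by
  refine ContinuousLinearMap.opNorm_le_of_re_inner_le hC fun ξ η hξ hη => ?_
  have h1 : ‖inner ℂ (S ξ) η‖ ≤ C * ‖ξ‖ * ‖η‖ := by
    refine le_of_tendsto (h ξ η).norm ?_
    filter_upwards [hT] with i hi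
    refine (norm_inner_le_norm _ _).trans ?_
    gcongr
    exact (T i).le_of_opNorm_le hi ξ
  rw [hξ, hη, mul_one, mul_one] at h1
  exact (Complex.re_le_norm _).trans h1

lemma WT.exists [CompleteSpace H] (U : Ultrafilter ι) (T : ι → H →L[ℂ] H) (M : ℝ)
    (hT : ∀ᶠ i in (U : Filter ι), ‖T i‖ ≤ M) : ∃ S, WT (U : Filter ι) T S := by
  have key : ∀ ξ η : H, ∃ z : ℂ, ‖z‖ ≤ M * ‖ξ‖ * ‖η‖ ∧
      Tendsto (fun i => inner ℂ (T i ξ) η) U (𝓝 z) := by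
    intro ξ η
    obtain ⟨z, hz, hz'⟩ := (isCompact_closedBall (0 : ℂ) (M * ‖ξ‖ * ‖η‖)).ultrafilter_le_nhds
      (U.map fun i => inner ℂ (T i ξ) η) (by
        rw [le_principal_iff]
        change ∀ᶠ i in (U : Filter ι), _
        filter_upwards [hT] with i hi
        simp only [mem_closedBall_zero_iff]
        refine (norm_inner_le_norm _ _).trans ?_
        gcongr
        exact (T i).le_of_opNorm_le hi ξ)
    exact ⟨z, by simpa using hz, hz'⟩
  choose f hf hf' using key
  let L : H →ₗ⋆[ℂ] H →ₗ[ℂ] ℂ := LinearMap.mk₂'ₛₗ (starRingEnd ℂ) (RingHom.id ℂ) f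
    (fun a b c => tendsto_nhds_unique (hf' _ _)
      (by simpa [inner_add_left] using (hf' a c).add (hf' b c)))
    (fun a b c => tendsto_nhds_unique (hf' _ _)
      (by simpa [inner_smul_left, mul_comm] using (hf' b c).const_mul (starRingEnd ℂ a)))
    (fun a b c => tendsto_nhds_unique (hf' _ _)
      (by simpa [inner_add_right] using (hf' a b).add (hf' a c)))
    (fun a b c => tendsto_nhds_unique (hf' _ _)
      (by simpa [inner_smul_right] using (hf' b c).const_mul a))
  let Bl : H →L⋆[ℂ] H →L[ℂ] ℂ := L.mkContinuous₂ M hf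
  refine ⟨InnerProductSpace.continuousLinearMapOfBilin Bl, fun ξ η => ?_⟩
  rw [InnerProductSpace.continuousLinearMapOfBilin_apply]
  exact hf' ξ η

end WTlemmas

/-- A nonunital C*-algebra contains two nonzero orthogonal positive elements. -/
lemma exists_orthogonal {A : Type*} [NonUnitalCStarAlgebra A] [PartialOrder A] [StarOrderedRing A]
    (h_nonunital : ¬ ∃ e : A, ∀ a : A, e * a = a ∧ a * e = a) :
    ∃ x y : A, 0 ≤ x ∧ 0 ≤ y ∧ x * y = 0 ∧ x ≠ 0 ∧ y ≠ 0 := by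
  by_contra! hcon
  apply h_nonunital
  by_cases hA : ∀ a : A, a = 0
  · exact ⟨0, fun a => by simp [hA a]⟩
  push Not at hA
  obtain ⟨b, hb⟩ := hA
  -- a positive element of norm one
  obtain ⟨a, ha0, ha1⟩ : ∃ a : A, 0 ≤ a ∧ ‖a‖ = 1 := by
    refine ⟨(‖star b * b‖⁻¹ : ℝ) • (star b * b), ?_, ?_⟩
    · exact smul_nonneg (by positivity) (star_mul_self_nonneg b)
    · have : ‖star b * b‖ ≠ 0 := by
        rw [CStarRing.norm_star_mul_self]
        simpa using hb
      rw [norm_smul]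
      simp [this]
  have hsa : IsSelfAdjoint a := IsSelfAdjoint.of_nonneg ha0
  have hsq : ‖a * a‖ = 1 := by
    have := CStarRing.norm_star_mul_self (x := a)
    rw [hsa.star_eq, ha1] at this
    simpa using this
  have hge : ∀ t : ℝ, 0 < t → t < 1 → t • a ≤ a * a := by
    intro t ht0 ht1
    set c := a * a - t • a with hc
    have hcs : IsSelfAdjoint c := by
      refine IsSelfAdjoint.sub ?_ ?_
      · simpa [hsa.star_eq] using IsSelfAdjoint.star_mul_self a
      · exact (IsSelfAdjoint.all t).smul hsa
    have hdec := CFC.posPart_sub_negPart c hcs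
    by_cases hn : c⁻ = 0
    · rw [hn, sub_zero] at hdec
      have : 0 ≤ c := hdec ▸ CFC.posPart_nonneg c
      exact sub_nonneg.mp this
    · exfalso
      have hp : c⁺ = 0 := by
        by_contra hp
        exact hn (hcon c⁺ c⁻ (CFC.posPart_nonneg c) (CFC.negPart_nonneg c)
          (CFC.posPart_mul_negPart c) hp)
      rw [hp, zero_sub] at hdec
      have h1 : c ≤ 0 := by
        rw [← hdec]; exact neg_nonpos.mpr (CFC.negPart_nonneg c)
      have h2 : a * a ≤ t • a := sub_nonpos.mp h1
      have h3 : 0 ≤ a * a := by simpa [hsa.star_eq] using star_mul_self_nonneg a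
      have h4 := CStarAlgebra.norm_le_norm_of_nonneg_of_le h3 h2
      rw [hsq, norm_smul, ha1, Real.norm_of_nonneg ht0.le] at h4
      linarith
  have hge1 : a ≤ a * a := by
    rw [← sub_nonneg]
    have hlim : Tendsto (fun t : ℝ => a * a - t • a) (𝓝[<] 1) (𝓝 (a * a - (1 : ℝ) • a)) := by
      refine Tendsto.mono_left ?_ nhdsWithin_le_nhds
      exact Continuous.tendsto (by fun_prop) _
    rw [one_smul] at hlim
    refine (CStarAlgebra.isClosed_nonneg (A := A)).mem_of_tendsto hlim ?_
    filter_upwards [Ioo_mem_nhdsLT (zero_lt_one (α := ℝ))] with t ht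
    exact sub_nonneg.mpr (hge t ht.1 ht.2)
  have hle : a * a ≤ a := by
    have h := CStarAlgebra.star_left_conjugate_le_norm_smul (a := CFC.sqrt a) (b := a) hsa
    have hs : IsSelfAdjoint (CFC.sqrt a) := IsSelfAdjoint.of_nonneg (CFC.sqrt_nonneg a)
    have h2 := CFC.sqrt_mul_sqrt_self a ha0
    rw [hs.star_eq, ha1, one_smul, h2] at h
    calc a * a = CFC.sqrt a * a * CFC.sqrt a := by
          have h5 : ∀ r : A, r * r * (r * r) = r * (r * r) * r := fun r => by
            simp only [mul_assoc]
          have h6 := h5 (CFC.sqrt a)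
          rwa [h2] at h6
      _ ≤ a := h
  have hp : a * a = a := le_antisymm hle hge1
  have hne : a ≠ 0 := by
    rintro rfl
    simp at ha1
  have hl : ∀ b : A, a * b = b := by
    intro b
    have h0 : (b - a * b) * star (b - a * b) = 0 := by
      refine hcon a _ ha0 (mul_star_self_nonneg _) ?_ hne
      rw [← mul_assoc, mul_sub, ← mul_assoc, hp, sub_self, zero_mul]
    have := CStarRing.mul_star_self_eq_zero_iff (b - a * b) |>.mp h0
    exact (sub_eq_zero.mp this).symm
  refine ⟨a, fun b => ⟨hl b, ?_⟩⟩
  have := congrArg star (hl (star b))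
  simpa [hsa.star_eq] using this

/-- The cut-down of a positive element of the unitization by an element of the algebra. -/
def cutDown {A : Type*} [NonUnitalCStarAlgebra A] (s : Unitization ℂ A) (e : A) : A :=
  s.snd * e * s.snd + s.fst • (s.snd * e) + s.fst • (e * s.snd) + (s.fst * s.fst) • e

lemma inr_cutDown {A : Type*} [NonUnitalCStarAlgebra A] (s : Unitization ℂ A) (e : A) :
    ((cutDown s e : A) : Unitization ℂ A) = s * (e : Unitization ℂ A) * s := by
  refine Unitization.ext ?_ ?_
  · simp
  · simp [cutDown, smul_smul, add_mul, smul_mul_assoc]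
    abel

lemma tendsto_cutDown {A : Type*} [NonUnitalCStarAlgebra A] {l : Filter A}
    (hl : l.IsApproximateUnit) (s : Unitization ℂ A) :
    Tendsto (fun e : A => cutDown s e - (s * s).fst • e) l (𝓝 (s * s).snd) := by
  have h1 := (hl.tendsto_mul_left s.snd)
  have h2 := (hl.tendsto_mul_right s.snd)
  have h := ((h1.mul_const s.snd).add (h1.const_smul s.fst)).add (h2.const_smul s.fst)
  have e1 : (s * s).snd = s.snd * s.snd + s.fst • s.snd + s.fst • s.snd := by
    simp; abel
  rw [e1]
  refine h.congr fun e => ?_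
  simp [cutDown]

lemma mul_sqrt_eq_zero {A : Type*} [CStarAlgebra A] [PartialOrder A] [StarOrderedRing A]
    {x y : A} (hx : 0 ≤ x) (hy : 0 ≤ y) (h : x * y = 0) :
    x * CFC.sqrt y = 0 ∧ CFC.sqrt y * x = 0 := by
  have hs : IsSelfAdjoint (CFC.sqrt y) := IsSelfAdjoint.of_nonneg (CFC.sqrt_nonneg y)
  have hxs : IsSelfAdjoint x := IsSelfAdjoint.of_nonneg hx
  have h1 : x * CFC.sqrt y = 0 := by
    rw [← CStarRing.mul_star_self_eq_zero_iff, star_mul, hs.star_eq, hxs.star_eq, ← mul_assoc,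
      mul_assoc x, CFC.sqrt_mul_sqrt_self y hy, h, zero_mul]
  refine ⟨h1, ?_⟩
  have := congrArg star h1
  simpa [hs.star_eq, hxs.star_eq] using this


/-- Let `A` be a nonunital C*-algebra, `π : B → B(H)` a nondegenerate
representation of a C*-algebra `B` on a Hilbert space `H`, and `φ : A → B` a bounded linear
ε-order zero map.  Then there is a bounded linear extension `φ† : A† → B(H)` of `π ∘ φ` to the
unitization `A†`, taking values in the double commutant `π(B)''`, which is still ε-order zero;
moreover, if `φ` is δ-self-adjoint then `φ†` can be chosen to be 6δ-self-adjoint. -/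
theorem stmt_5 {A B H : Type*} [NonUnitalCStarAlgebra A] [PartialOrder A] [StarOrderedRing A]
    [NonUnitalCStarAlgebra B] [NormedAddCommGroup H] [InnerProductSpace ℂ H] [CompleteSpace H]
    (h_nonunital : ¬ ∃ e : A, ∀ a : A, e * a = a ∧ a * e = a)
    (π : B →⋆ₙₐ[ℂ] (H →L[ℂ] H))
    (h_nondeg :
      (Submodule.span ℂ {v : H | ∃ (b : B) (ξ : H), v = π b ξ}).topologicalClosure = ⊤)
    (ε δ : ℝ) (φ : A →L[ℂ] B) (hφ : IsEpsOrderZero ε φ) :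
    ∃ φdag : Unitization ℂ A →L[ℂ] (H →L[ℂ] H),
      (∀ z : Unitization ℂ A,
        φdag z ∈ Set.centralizer (Set.centralizer (Set.range (⇑π)))) ∧
      (∀ x : A, φdag (x : Unitization ℂ A) = π (φ x)) ∧
      IsEpsOrderZero ε φdag ∧
      (IsDeltaSelfAdjoint δ φ → IsDeltaSelfAdjoint (6 * δ) φdag) := by
  classical
  have hπle : ∀ b : B, ‖π b‖ ≤ ‖b‖ := fun b => NonUnitalStarAlgHom.norm_apply_le π b
  let πL : B →L[ℂ] (H →L[ℂ] H) :=
    LinearMap.mkContinuous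
      { toFun := π, map_add' := map_add π, map_smul' := fun c b => map_smul π c b } 1
      (fun b => by simpa using hπle b)
  let ψ : A →L[ℂ] (H →L[ℂ] H) := πL.comp φ
  have hψ : ∀ a, ψ a = π (φ a) := fun a => rfl
  obtain ⟨x₀, y₀, hx₀, hy₀, hxy₀, hx₀', hy₀'⟩ := exists_orthogonal h_nonunital
  have hε : 0 ≤ ε := by
    have h1 := (norm_nonneg _).trans (hφ x₀ y₀ hx₀ hy₀ hxy₀)
    by_contra! hneg
    have : 0 < ‖x₀‖ * ‖y₀‖ := mul_pos (norm_pos_iff.mpr hx₀') (norm_pos_iff.mpr hy₀')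
    nlinarith
  have hinc := CStarAlgebra.increasingApproximateUnit A
  let U : Ultrafilter A := Ultrafilter.of (CStarAlgebra.approximateUnit A)
  have hU : (U : Filter A) ≤ CStarAlgebra.approximateUnit A := Ultrafilter.of_le _
  have hau : (U : Filter A).IsApproximateUnit :=
    { neBot := U.neBot
      tendsto_mul_left := fun m => (hinc.tendsto_mul_left m).mono_left hU
      tendsto_mul_right := fun m => (hinc.tendsto_mul_right m).mono_left hU }
  have hUpos : ∀ᶠ e in (U : Filter A), 0 ≤ e := hU hinc.eventually_nonneg
  have hUnorm : ∀ᶠ e in (U : Filter A), ‖e‖ ≤ 1 := hU hinc.eventually_norm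
  obtain ⟨T, hT⟩ := WT.exists U (fun e => ψ e) ‖ψ‖ (by
    filter_upwards [hUnorm] with e he
    simpa using ψ.le_opNorm_of_le he)
  let Φ : Unitization ℂ A →L[ℂ] (H →L[ℂ] H) :=
    { toFun := fun z => ψ z.snd + z.fst • T
      map_add' := fun z w => by
        simp only [Unitization.snd_add, Unitization.fst_add, map_add, add_smul]
        abel
      map_smul' := fun c z => by
        simp only [Unitization.snd_smul, Unitization.fst_smul, map_smul, smul_add, smul_smul,
          smul_eq_mul, RingHom.id_apply]
      cont := by
        have h1 : Continuous fun z : Unitization ℂ A => z.snd := Unitization.continuous_snd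
        have h2 : Continuous fun z : Unitization ℂ A => z.fst := Unitization.continuous_fst
        exact (ψ.continuous.comp h1).add (h2.smul continuous_const) }
  have hΦ : ∀ z, Φ z = ψ z.snd + z.fst • T := fun z => rfl
  have hΦA : ∀ x : A, Φ (x : Unitization ℂ A) = ψ x := fun x => by simp [hΦ]
  -- approximation of the values of `Φ` on squares
  have happ : ∀ s : Unitization ℂ A,
      WT (U : Filter A) (fun e => ψ (cutDown s e)) (Φ (s * s)) := by
    intro s
    have h1 : WT (U : Filter A) (fun e => ψ (cutDown s e - (s * s).fst • e)) (ψ (s * s).snd) :=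
      WT.of_tendsto ((ψ.continuous.tendsto _).comp (tendsto_cutDown hau s))
    have h2 := h1.add (hT.smul (s * s).fst)
    refine h2.congr (Eventually.of_forall fun e => ?_)
    simp only [map_sub, map_smul]
    abel
  -- properties of the cut-downs
  have hcut : ∀ x : A, ∀ y : Unitization ℂ A, 0 ≤ x → 0 ≤ y →
      (x : Unitization ℂ A) * y = 0 → ∀ᶠ e in (U : Filter A),
        0 ≤ cutDown (CFC.sqrt y) e ∧ x * cutDown (CFC.sqrt y) e = 0 ∧
        cutDown (CFC.sqrt y) e * x = 0 ∧ ‖cutDown (CFC.sqrt y) e‖ ≤ ‖y‖ := by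
    intro x y hx hy hxy
    obtain ⟨h1, h2⟩ := mul_sqrt_eq_zero (Unitization.inr_nonneg_iff.mpr hx) hy hxy
    have hs : IsSelfAdjoint (CFC.sqrt y) := IsSelfAdjoint.of_nonneg (CFC.sqrt_nonneg y)
    filter_upwards [hUpos, hUnorm] with e he he1
    refine ⟨?_, ?_, ?_, ?_⟩
    · rw [← Unitization.inr_nonneg_iff, inr_cutDown]
      have := star_left_conjugate_nonneg (Unitization.inr_nonneg_iff.mpr he) (CFC.sqrt y)
      rwa [hs.star_eq] at this
    · apply Unitization.inr_injective (R := ℂ)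
      rw [Unitization.inr_mul, inr_cutDown, ← mul_assoc, ← mul_assoc, h1]
      simp
    · apply Unitization.inr_injective (R := ℂ)
      rw [Unitization.inr_mul, inr_cutDown, mul_assoc, h2]
      simp
    · rw [← Unitization.norm_inr (𝕜 := ℂ), inr_cutDown]
      have hn : ‖CFC.sqrt y‖ * ‖CFC.sqrt y‖ = ‖y‖ := by
        rw [← CStarRing.norm_star_mul_self, hs.star_eq, CFC.sqrt_mul_sqrt_self y hy]
      calc ‖CFC.sqrt y * (e : Unitization ℂ A) * CFC.sqrt y‖
          ≤ ‖CFC.sqrt y‖ * ‖(e : Unitization ℂ A)‖ * ‖CFC.sqrt y‖ :=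
            (norm_mul_le _ _).trans (by gcongr; exact norm_mul_le _ _)
        _ ≤ ‖CFC.sqrt y‖ * 1 * ‖CFC.sqrt y‖ := by
            gcongr
            rwa [Unitization.norm_inr]
        _ = ‖y‖ := by rw [mul_one, hn]
  have hsaNonneg : ∀ {z : Unitization ℂ A}, z.fst = 0 → (z.snd : Unitization ℂ A) = z := by
    intro z hz
    refine Unitization.ext ?_ ?_
    · simp [hz]
    · simp
  have hTcomm : ∀ S ∈ Set.centralizer (Set.range (⇑π)), S * T = T * S := by
    intro S hS
    have h1 := hT.mul_left S
    have h2 := hT.mul_right S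
    refine h1.unique (h2.congr (Eventually.of_forall fun e => ?_))
    exact hS _ ⟨φ e, rfl⟩
  refine ⟨Φ, ?_, hΦA, ?_, ?_⟩
  · intro z S hS
    rw [hΦ, mul_add, add_mul, mul_smul_comm, smul_mul_assoc, hTcomm S hS]
    congr 1
    exact (hS _ ⟨φ z.snd, rfl⟩).symm
  · intro x y hx hy hxy
    have hprod : x.fst * y.fst = 0 := by
      have := congrArg (fun w : Unitization ℂ A => w.fst) hxy
      simpa using this
    rcases mul_eq_zero.mp hprod with h0 | h0
    · have hxe := hsaNonneg h0
      have hx' : 0 ≤ x.snd := by rwa [← Unitization.inr_nonneg_iff, hxe]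
      have hc := hcut x.snd y hx' hy (by rw [hxe, hxy])
      have hw := (happ (CFC.sqrt y)).mul_left (Φ x)
      rw [CFC.sqrt_mul_sqrt_self y hy] at hw
      refine hw.norm_le (by positivity) ?_
      filter_upwards [hc] with e he
      obtain ⟨e1, e2, e3, e4⟩ := he
      rw [← hxe, hΦA, hψ, hψ, ← map_mul, Unitization.norm_inr]
      refine (hπle _).trans ((hφ _ _ hx' e1 e2).trans ?_)
      gcongr
    · have hye := hsaNonneg h0
      have hy' : 0 ≤ y.snd := by rwa [← Unitization.inr_nonneg_iff, hye]
      have hyx : y * x = 0 := by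
        have := congrArg star hxy
        simpa [(IsSelfAdjoint.of_nonneg hx).star_eq, (IsSelfAdjoint.of_nonneg hy).star_eq]
          using this
      have hc := hcut y.snd x hy' hx (by rw [hye, hyx])
      have hw := (happ (CFC.sqrt x)).mul_right (Φ y)
      rw [CFC.sqrt_mul_sqrt_self x hx] at hw
      refine hw.norm_le (by positivity) ?_
      filter_upwards [hc] with e he
      obtain ⟨e1, e2, e3, e4⟩ := he
      rw [← hye, hΦA, hψ, hψ, ← map_mul, Unitization.norm_inr]
      refine (hπle _).trans ((hφ _ _ e1 hy' e3).trans ?_)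
      gcongr
  · intro hδ z
    have hδ0 : 0 ≤ δ := by
      have h1 := (norm_nonneg _).trans (hδ x₀)
      have h2 : 0 < ‖x₀‖ := norm_pos_iff.mpr hx₀'
      by_contra! hneg
      nlinarith
    have hψδ : ∀ a, ‖ψ (star a) - star (ψ a)‖ ≤ δ * ‖a‖ := by
      intro a
      rw [hψ, hψ, ← map_star, ← map_sub]
      exact (hπle _).trans (hδ a)
    have hTδ : ‖T - star T‖ ≤ δ := by
      refine (hT.sub hT.star).norm_le hδ0 ?_
      filter_upwards [hUpos, hUnorm] with e he he1
      have h1 := hψδ e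
      rw [(IsSelfAdjoint.of_nonneg he).star_eq] at h1
      exact h1.trans (mul_le_of_le_one_right hδ0 he1)
    have hfst : ‖z.fst‖ ≤ ‖z‖ := by
      rw [Unitization.norm_eq_sup]
      exact le_sup_left
    have hsnd : ‖z.snd‖ ≤ 2 * ‖z‖ := by
      have h1 : (z.snd : Unitization ℂ A) = z - algebraMap ℂ _ z.fst := by
        rw [eq_sub_iff_add_eq, Algebra.algebraMap_eq_smul_one]
        refine Unitization.ext ?_ ?_
        · simp
        · simp
      rw [← Unitization.norm_inr (𝕜 := ℂ), h1]
      refine (norm_sub_le _ _).trans ?_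
      rw [norm_algebraMap']
      linarith
    have heq : Φ (star z) - star (Φ z)
        = (ψ (star z.snd) - star (ψ z.snd)) + star z.fst • (T - star T) := by
      rw [hΦ, hΦ, star_add, star_smul, Unitization.snd_star, Unitization.fst_star, smul_sub]
      abel
    rw [heq]
    calc _ ≤ δ * ‖z.snd‖ + ‖z.fst‖ * δ := by
          refine (norm_add_le _ _).trans (add_le_add (hψδ _) ?_)
          rw [norm_smul, norm_star]
          gcongr
      _ ≤ δ * (2 * ‖z‖) + ‖z‖ * δ := by gcongr
      _ ≤ 6 * δ * ‖z‖ := by nlinarith [mul_nonneg hδ0 (norm_nonneg z)]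
end

section
/- Let X be a metric space and let f : X → ℝ be a nonnegative bounded function of Baire class 1, meaning that for every open set U ⊆ ℝ the preimage f⁻¹(U) is an Fσ set (a countable union of closed sets). Then there exists a sequence (f_n) of nonnegative simple functions f_n : X → [0,∞) (each taking finitely many values) converging pointwise to f, such that for every n: the set {x : f_n(x) > 0} is contained in {x : f(x) > 0}, sup_x f_n(x) ≤ sup_x f(x), and for every t > 0 the set f_n⁻¹({t}) is an Fσ set. -/
/-- A set is Fσ if it is a countable union of closed sets. -/
def IsFsigma {X : Type*} [TopologicalSpace X] (A : Set X) : Prop :=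
  ∃ F : ℕ → Set X, (∀ n, IsClosed (F n)) ∧ A = ⋃ n, F n

theorem IsFsigma.of_closed_aux {X : Type*} [TopologicalSpace X] {A : Set X} (h : IsClosed A) :
    IsFsigma A := ⟨fun _ => A, fun _ => h, by simp [Set.iUnion_const]⟩

theorem IsFsigma.inter_aux {X : Type*} [TopologicalSpace X] {A B : Set X}
    (hA : IsFsigma A) (hB : IsFsigma B) : IsFsigma (A ∩ B) := by
  obtain ⟨F, hF, rfl⟩ := hA
  obtain ⟨G, hG, rfl⟩ := hB
  refine ⟨fun n => F n.unpair.1 ∩ G n.unpair.2, fun n => (hF _).inter (hG _), ?_⟩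
  ext x
  simp only [Set.mem_inter_iff, Set.mem_iUnion]
  constructor
  · rintro ⟨⟨a, ha⟩, b, hb⟩
    exact ⟨Nat.pair a b, by simpa using ⟨ha, hb⟩⟩
  · rintro ⟨n, h1, h2⟩
    exact ⟨⟨_, h1⟩, _, h2⟩

theorem IsFsigma.union_aux {X : Type*} [TopologicalSpace X] {A B : Set X}
    (hA : IsFsigma A) (hB : IsFsigma B) : IsFsigma (A ∪ B) := by
  obtain ⟨F, hF, rfl⟩ := hA
  obtain ⟨G, hG, rfl⟩ := hB
  refine ⟨fun n => F n ∪ G n, fun n => (hF _).union (hG _), ?_⟩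
  rw [Set.iUnion_union_distrib]

theorem IsFsigma.of_open_aux {X : Type*} [MetricSpace X] {A : Set X} (h : IsOpen A) :
    IsFsigma A := by
  obtain ⟨F, hF, -, h2, -⟩ := h.exists_iUnion_isClosed
  exact ⟨F, hF, h2.symm⟩

open Classical in
/-- Running maximum of `q i` over those `i < n` with `x ∈ F i` (and `0`). -/
noncomputable def runMax {X : Type*} (q : ℕ → ℝ) (F : ℕ → Set X) : ℕ → X → ℝ
  | 0 => fun _ => 0
  | n + 1 => fun x => if x ∈ F n then max (runMax q F n x) (q n) else runMax q F n x

theorem runMax_mono {X : Type*} (q : ℕ → ℝ) (F : ℕ → Set X) (x : X) :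
    Monotone (fun n => runMax q F n x) := by
  refine monotone_nat_of_le_succ fun n => ?_
  simp only [runMax]
  split_ifs
  · exact le_max_left _ _
  · exact le_rfl

theorem runMax_le {X : Type*} (q : ℕ → ℝ) (F : ℕ → Set X) (f : X → ℝ) (h0 : ∀ x, 0 ≤ f x)
    (h : ∀ n, ∀ x ∈ F n, q n ≤ f x) (n : ℕ) (x : X) : runMax q F n x ≤ f x := by
  induction n with
  | zero => exact h0 x
  | succ n ih =>
    simp only [runMax]
    split_ifs with hx
    · exact max_le ih (h n x hx)
    · exact ih

theorem runMax_finite {X : Type*} (q : ℕ → ℝ) (F : ℕ → Set X) (n : ℕ) :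
    (Set.range (runMax q F n)).Finite := by
  induction n with
  | zero => exact (Set.finite_singleton (0 : ℝ)).subset (by rintro _ ⟨x, rfl⟩; rfl)
  | succ n ih =>
    refine (ih.union (ih.image (fun y => max y (q n)))).subset ?_
    rintro _ ⟨x, rfl⟩
    simp only [runMax]
    split_ifs
    · exact Or.inr ⟨_, ⟨x, rfl⟩, rfl⟩
    · exact Or.inl ⟨x, rfl⟩

theorem runMax_fsigma {X : Type*} [MetricSpace X] (q : ℕ → ℝ) (F : ℕ → Set X)
    (hF : ∀ n, IsClosed (F n)) (n : ℕ) : ∀ S : Set ℝ, IsFsigma (runMax q F n ⁻¹' S) := by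
  induction n with
  | zero =>
    intro S
    apply IsFsigma.of_closed_aux
    by_cases h : (0 : ℝ) ∈ S
    · convert isClosed_univ
      ext x; simp [runMax, h]
    · convert isClosed_empty
      ext x; simp [runMax, h]
  | succ n ih =>
    intro S
    have : runMax q F (n + 1) ⁻¹' S =
        (F n ∩ runMax q F n ⁻¹' {y | max y (q n) ∈ S}) ∪ ((F n)ᶜ ∩ runMax q F n ⁻¹' S) := by
      ext x
      by_cases hx : x ∈ F n <;> simp [runMax, hx]
    rw [this]
    exact ((IsFsigma.of_closed_aux (hF n)).inter_aux (ih _)).union_aux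
      ((IsFsigma.of_open_aux (hF n).isOpen_compl).inter_aux (ih _))

/-- Let `f : X → ℝ` be a nonnegative bounded function of Baire class 1 on a
metric space `X` (preimages of open sets are Fσ). Then there is a sequence of nonnegative
simple functions `fn` converging pointwise to `f` such that each `fn` vanishes wherever `f`
does, `sup fn ≤ sup f`, and for every `t > 0` the level set `fn⁻¹({t})` is Fσ. -/
theorem stmt_17 {X : Type*} [MetricSpace X] (f : X → ℝ)
    (hf_nonneg : ∀ x, 0 ≤ f x) (hf_bdd : BddAbove (Set.range f))
    (hf_baire : ∀ U : Set ℝ, IsOpen U → IsFsigma (f ⁻¹' U)) :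
    ∃ fn : ℕ → X → ℝ,
      (∀ n x, 0 ≤ fn n x) ∧
      (∀ n, (Set.range (fn n)).Finite) ∧
      (∀ x, Filter.Tendsto (fun n => fn n x) Filter.atTop (nhds (f x))) ∧
      (∀ n, {x | 0 < fn n x} ⊆ {x | 0 < f x}) ∧
      (∀ n, ⨆ x, fn n x ≤ ⨆ x, f x) ∧
      (∀ n, ∀ t : ℝ, 0 < t → IsFsigma (fn n ⁻¹' {t})) := by
  have hI : ∀ q : ℚ, IsFsigma (f ⁻¹' Set.Ioi (q : ℝ)) := fun q => hf_baire _ isOpen_Ioi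
  choose G hGc hG using hI
  let e := Denumerable.eqv (ℚ × ℕ)
  let q : ℕ → ℝ := fun n => ((e.symm n).1 : ℝ)
  let F : ℕ → Set X := fun n => G (e.symm n).1 (e.symm n).2
  have hFq : ∀ n, ∀ x ∈ F n, q n ≤ f x := by
    intro n x hx
    have : x ∈ f ⁻¹' Set.Ioi (q n) := by
      rw [hG]
      exact Set.mem_iUnion.2 ⟨_, hx⟩
    exact le_of_lt this
  have hle := runMax_le q F f hf_nonneg hFq
  have hnn : ∀ n x, 0 ≤ runMax q F n x := fun n x => runMax_mono q F x (Nat.zero_le n)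
  refine ⟨runMax q F, hnn, runMax_finite q F, fun x => ?_,
    fun n x hx => lt_of_lt_of_le hx (hle n x), fun n => ciSup_mono hf_bdd (hle n),
    fun n t _ => runMax_fsigma q F (fun n => hGc _ _) n _⟩
  refine tendsto_order.2 ⟨fun a ha => ?_, fun a ha =>
    Filter.Eventually.of_forall fun n => (hle n x).trans_lt ha⟩
  obtain ⟨r, har, hr⟩ := exists_rat_btwn ha
  have hx : x ∈ f ⁻¹' Set.Ioi (r : ℝ) := hr
  rw [hG] at hx
  obtain ⟨m, hm⟩ := Set.mem_iUnion.1 hx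
  have hxF : x ∈ F (e (r, m)) := by simpa [F] using hm
  have hq : q (e (r, m)) = r := by simp [q]
  filter_upwards [Filter.eventually_ge_atTop (e (r, m) + 1)] with n hn
  refine har.trans_le (le_trans ?_ (runMax_mono q F x hn))
  simp only [runMax, if_pos hxF, hq]
  exact le_max_right _ _
end
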